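/- Assume the su(2) endomorphism triple setup with Casimir parameter j, where j is a real number with j > 0. Let φ ∈ V, λ ∈ ℂ, and set a_a := −(λ/(j(j+1))) · T_a(φ) for a = 1,2,3. If φ ≠ 0, then the indicial equations λ·a_a + T_a(φ) − Σ_{b,c} ε_{abc} T_b(a_c) = 0 (for a = 1,2,3) and λ·φ − Σ_{a} T_a(a_a) = 0 hold if and only if λ² − λ − j(j+1) = 0, that is, if and only if λ = j+1 or λ = −j. -/

import Mathlib

/-- The Levi-Civita symbol on three indices, with `ε₀₁₂ = 1`. -/
noncomputable def eps3 (a b c : Fin 3) : ℂ :=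
  ((((c.val : ℤ) - (b.val : ℤ)) * ((c.val : ℤ) - (a.val : ℤ)) *
      ((b.val : ℤ) - (a.val : ℤ)) : ℤ) : ℂ) / 2

/-!
Read `φ ↦ (T_i φ)_i`, `a ↦ ∑ T_i a_i` and `a ↦ (∑ ε_{ibc} T_b a_c)_i` as a gradient, a divergence
and a curl. The commutation relations say `curl (grad v) = grad v`, and the Casimir condition says
`div (grad v) = -c v` with `c = j (j + 1)`. On the ansatz `a = μ grad φ` the equations become
`(λ μ + 1 - μ) grad φ = 0` and `(λ + μ c) φ = 0`. The choice `μ = -λ / c` solves the second one and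
turns the coefficient of the first into `-(λ² - λ - c) / c`, while `grad φ ≠ 0` because
`div (grad φ) = -c φ ≠ 0`.
-/

section Ring

variable {R V : Type*} [CommRing R] [AddCommGroup V] [Module R V]

/-- The gradient `v ↦ (T i v)_i` of a family of endomorphisms acting as partial derivatives. -/
def endGrad {ι : Type*} (T : ι → Module.End R V) : V →ₗ[R] ι → V :=
  LinearMap.pi T

/-- The divergence `a ↦ ∑ i, T i (a i)` of a finite family of endomorphisms acting as partial
derivatives. -/
def endDiv {ι : Type*} [Fintype ι] (T : ι → Module.End R V) : (ι → V) →ₗ[R] V :=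
  ∑ i, T i ∘ₗ LinearMap.proj i

/-- The curl of a triple of endomorphisms acting as partial derivatives. The indices `i + 1` and
`i + 2` are taken modulo `3`, so that the formula is the one of the cross product. -/
def endCurl (T : Fin 3 → Module.End R V) : (Fin 3 → V) →ₗ[R] Fin 3 → V :=
  LinearMap.pi fun i => T (i + 1) ∘ₗ LinearMap.proj (i + 2) - T (i + 2) ∘ₗ LinearMap.proj (i + 1)

/-- The commutation relations of the standard basis of `su(2)`, with indices modulo `3`. Only a
bracket is asked for, so that the notion applies to endomorphisms with their ring commutator. -/
def IsSu2Triple {L : Type*} [Bracket L L] (T : Fin 3 → L) : Prop :=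
  ∀ i, ⁅T (i + 1), T (i + 2)⁆ = T i

@[simp]
theorem endGrad_apply {ι : Type*} (T : ι → Module.End R V) (v : V) (i : ι) :
    endGrad T v i = T i v :=
  rfl

@[simp]
theorem endDiv_apply {ι : Type*} [Fintype ι] (T : ι → Module.End R V) (a : ι → V) :
    endDiv T a = ∑ i, T i (a i) := by
  simp [endDiv]

@[simp]
theorem endCurl_apply (T : Fin 3 → Module.End R V) (a : Fin 3 → V) (i : Fin 3) :
    endCurl T a i = T (i + 1) (a (i + 2)) - T (i + 2) (a (i + 1)) :=
  rfl

theorem endDiv_endGrad {ι : Type*} [Fintype ι] (T : ι → Module.End R V) (v : V) :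
    endDiv T (endGrad T v) = (∑ i, T i ^ 2) v := by
  simp [pow_two]

theorem IsSu2Triple.endCurl_endGrad {T : Fin 3 → Module.End R V} (hT : IsSu2Triple T) (v : V) :
    endCurl T (endGrad T v) = endGrad T v := by
  ext i
  exact LinearMap.congr_fun (hT i) v

theorem IsSu2Triple.smul_add_endGrad_sub_endCurl {T : Fin 3 → Module.End R V}
    (hT : IsSu2Triple T) (lam μ : R) (v : V) :
    lam • μ • endGrad T v + endGrad T v - endCurl T (μ • endGrad T v)
      = (lam * μ + 1 - μ) • endGrad T v := by
  rw [map_smul (endCurl T), hT.endCurl_endGrad]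
  module

theorem smul_sub_endDiv_smul_endGrad {ι : Type*} [Fintype ι] {T : ι → Module.End R V} {c : R}
    (hcas : ∑ i, T i ^ 2 = -c • (1 : Module.End R V)) (lam μ : R) (v : V) :
    lam • v - endDiv T (μ • endGrad T v) = (lam + μ * c) • v := by
  rw [map_smul, endDiv_endGrad, hcas, LinearMap.smul_apply, Module.End.one_apply]
  module

theorem endGrad_ne_zero {ι : Type*} [Fintype ι] [IsDomain R] [Module.IsTorsionFree R V]
    {T : ι → Module.End R V} {c : R} (hc : c ≠ 0)
    (hcas : ∑ i, T i ^ 2 = -c • (1 : Module.End R V)) {v : V} (hv : v ≠ 0) :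
    endGrad T v ≠ 0 := by
  intro hgrad
  have hcv : -c • v = 0 := by
    simpa [hgrad, hcas] using (endDiv_endGrad T v).symm
  exact smul_ne_zero (neg_ne_zero.mpr hc) hv hcv

theorem sq_sub_self_sub_mul_add_one_eq_zero_iff [NoZeroDivisors R] (x j : R) :
    x ^ 2 - x - j * (j + 1) = 0 ↔ x = j + 1 ∨ x = -j := by
  have hfactor : x ^ 2 - x - j * (j + 1) = (x - (j + 1)) * (x - -j) := by ring
  rw [hfactor, mul_eq_zero, sub_eq_zero, sub_eq_zero]

end Ring

theorem sum_eps3_smul {V : Type*} [AddCommGroup V] [Module ℂ V] (f : Fin 3 → Fin 3 → V)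
    (i : Fin 3) :
    ∑ b, ∑ c, eps3 i b c • f b c = f (i + 1) (i + 2) - f (i + 2) (i + 1) := by
  fin_cases i <;>
    simp only [Fin.zero_eta, Fin.mk_one, Fin.reduceFinMk, Fin.reduceAdd, Fin.sum_univ_three] <;>
    norm_num [eps3] <;> abel

theorem IsSu2Triple.indicial_equations_iff {K V : Type*} [Field K] [AddCommGroup V] [Module K V]
    {T : Fin 3 → Module.End K V} (hT : IsSu2Triple T) {c : K} (hc : c ≠ 0)
    (hcas : ∑ i, T i ^ 2 = -c • (1 : Module.End K V)) {φ : V} (hφ : φ ≠ 0) {lam : K}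
    {a : Fin 3 → V} (ha : a = -(lam / c) • endGrad T φ) :
    (lam • a + endGrad T φ - endCurl T a = 0 ∧ lam • φ - endDiv T a = 0)
      ↔ lam ^ 2 - lam - c = 0 := by
  have hvector : lam * -(lam / c) + 1 - -(lam / c) = -(lam ^ 2 - lam - c) / c := by
    field_simp
    ring
  have hscalar : lam + -(lam / c) * c = 0 := by
    field_simp
    ring
  rw [ha, hT.smul_add_endGrad_sub_endCurl, smul_sub_endDiv_smul_endGrad hcas, hvector, hscalar]
  simp only [zero_smul, and_true, smul_eq_zero, endGrad_ne_zero hc hcas hφ, or_false,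
    div_eq_zero_iff, hc, neg_eq_zero]

theorem indicial_equation_iff_general {K V : Type*} [Field K] [AddCommGroup V] [Module K V]
    {T : Fin 3 → Module.End K V} (hT : IsSu2Triple T) {j : K} (hj : j * (j + 1) ≠ 0)
    (hcas : ∑ i, T i ^ 2 = -(j * (j + 1)) • (1 : Module.End K V))
    {φ : V} (hφ : φ ≠ 0) {lam : K} {a : Fin 3 → V}
    (ha : a = -(lam / (j * (j + 1))) • endGrad T φ) :
    ((lam • a + endGrad T φ - endCurl T a = 0 ∧ lam • φ - endDiv T a = 0)
      ↔ lam ^ 2 - lam - j * (j + 1) = 0)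
    ∧ (lam ^ 2 - lam - j * (j + 1) = 0 ↔ (lam = j + 1 ∨ lam = -j)) :=
  ⟨hT.indicial_equations_iff hj hcas hφ ha, sq_sub_self_sub_mul_add_one_eq_zero_iff lam j⟩

/-- For an su(2) endomorphism triple with Casimir parameter `j > 0`, the indicial equations
in the `(a_a, φ_y)` sector, with `a_a = −(λ/(j(j+1))) T_a(φ)` and `φ ≠ 0`, hold if and only
if `λ² − λ − j(j+1) = 0`, i.e. if and only if `λ = j+1` or `λ = −j`. -/
theorem indicial_equation_iff {V : Type*} [AddCommGroup V] [Module ℂ V]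
    (T : Fin 3 → Module.End ℂ V)
    (h12 : T 0 * T 1 - T 1 * T 0 = T 2)
    (h23 : T 1 * T 2 - T 2 * T 1 = T 0)
    (h31 : T 2 * T 0 - T 0 * T 2 = T 1)
    (j : ℝ) (hj : 0 < j)
    (hcas : T 0 ^ 2 + T 1 ^ 2 + T 2 ^ 2
      = -(((j * (j + 1) : ℝ) : ℂ)) • (1 : Module.End ℂ V))
    (φ : V) (hφ : φ ≠ 0) (lam : ℂ) (a : Fin 3 → V)
    (ha : ∀ i, a i = -(lam / ((j * (j + 1) : ℝ) : ℂ)) • T i φ) :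
    (((∀ i, lam • a i + T i φ - ∑ b, ∑ c, eps3 i b c • T b (a c) = 0) ∧
        lam • φ - ∑ i, T i (a i) = 0)
      ↔ lam ^ 2 - lam - ((j * (j + 1) : ℝ) : ℂ) = 0)
    ∧ (lam ^ 2 - lam - ((j * (j + 1) : ℝ) : ℂ) = 0
      ↔ (lam = (j : ℂ) + 1 ∨ lam = -(j : ℂ))) := by
  have hT : IsSu2Triple T := by
    intro i
    fin_cases i
    exacts [h23, h31, h12]
  have hj' : (j : ℂ) * (j + 1) ≠ 0 := by
    exact_mod_cast (by positivity : j * (j + 1) ≠ 0)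
  push_cast at hcas ha ⊢
  have hgeneral := indicial_equation_iff_general hT hj' (by rwa [Fin.sum_univ_three]) hφ (funext ha)
  simpa [funext_iff, sum_eps3_smul] using hgeneral
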